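/- For every real λ > 0, f(λ) > −0.02, where f(λ) = λ · Σ_{x=0}^∞ log((x+1/2)/λ) · e^{-λ}λ^x/x!. -/

import Mathlib

noncomputable def f (lam : ℝ) : ℝ :=
  lam * ∑' x : ℕ, Real.log (((x : ℝ) + 1 / 2) / lam) * Real.exp (-lam) * lam ^ x / (Nat.factorial x : ℝ)


/-- Exponential generating series of the sequence `a`. -/
noncomputable def egs (a : ℕ → ℝ) (l : ℝ) : ℝ := ∑' x : ℕ, a x * (l ^ x / (Nat.factorial x : ℝ))

lemma egs_summable {a : ℕ → ℝ} {C : ℝ} (ha : ∀ x, |a x| ≤ C * 2 ^ x) (l : ℝ) :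
    Summable (fun x : ℕ => a x * (l ^ x / (Nat.factorial x : ℝ))) := by
  refine Summable.of_norm_bounded (g := fun x : ℕ => C * ((2 * |l|) ^ x / (Nat.factorial x : ℝ)))
    ((Real.summable_pow_div_factorial (2 * |l|)).mul_left C) ?_
  intro x
  rw [Real.norm_eq_abs, abs_mul, abs_div, abs_pow, Nat.abs_cast, mul_pow]
  calc |a x| * (|l| ^ x / (Nat.factorial x : ℝ))
      ≤ (C * 2 ^ x) * (|l| ^ x / (Nat.factorial x : ℝ)) :=
        mul_le_mul_of_nonneg_right (ha x) (by positivity)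
    _ = _ := by ring

lemma egs_hasDerivAt {a : ℕ → ℝ} {C : ℝ} (ha : ∀ x, |a x| ≤ C * 2 ^ x) (l : ℝ) :
    HasDerivAt (egs a) (egs (fun x => a (x + 1)) l) l := by
  have hC : 0 ≤ C := by
    have := (abs_nonneg _).trans (ha 0)
    simpa using this
  set R : ℝ := |l| + 1 with hR
  have hR1 : 1 ≤ R := by have := abs_nonneg l; linarith
  have key := hasDerivAt_tsum_of_isPreconnected
    (g := fun (x : ℕ) (y : ℝ) => a x * (y ^ x / (Nat.factorial x : ℝ)))
    (g' := fun (x : ℕ) (y : ℝ) => a x * (((x : ℝ) * y ^ (x - 1)) / (Nat.factorial x : ℝ)))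
    (u := fun x : ℕ => C * ((4 * R) ^ x / (Nat.factorial x : ℝ)))
    (t := Metric.ball (0 : ℝ) R) (y₀ := l) (y := l)
    ((Real.summable_pow_div_factorial (4 * R)).mul_left C)
    Metric.isOpen_ball (convex_ball (0 : ℝ) R).isPreconnected
    (by
      intro n y _
      exact ((hasDerivAt_pow n y).div_const _).const_mul _)
    (by
      intro n y hy
      have hy' : |y| ≤ R := by
        have := Metric.mem_ball.mp hy
        rw [Real.dist_eq, sub_zero] at this
        exact this.le
      have h1 : (n : ℝ) ≤ 2 ^ n := by exact_mod_cast (Nat.lt_two_pow_self (n := n)).le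
      have h2 : |y| ^ (n - 1) ≤ R ^ n :=
        (pow_le_pow_left₀ (abs_nonneg y) hy' _).trans (pow_le_pow_right₀ hR1 (Nat.sub_le n 1))
      rw [Real.norm_eq_abs, abs_mul, abs_div, abs_mul, abs_pow, Nat.abs_cast, Nat.abs_cast]
      calc |a n| * ((n : ℝ) * |y| ^ (n - 1) / (Nat.factorial n : ℝ))
          ≤ (C * 2 ^ n) * ((2 ^ n * R ^ n) / (Nat.factorial n : ℝ)) := by
            gcongr
            exact ha n
        _ = C * ((4 * R) ^ n / (Nat.factorial n : ℝ)) := by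
            have : (4 : ℝ) * R = 2 * 2 * R := by ring
            rw [this, mul_pow, mul_pow]; ring)
    (by simp [Metric.mem_ball, hR])
    (egs_summable ha l)
    (by simp [Metric.mem_ball, hR])
  have hsum : Summable (fun x : ℕ => a x * (((x : ℝ) * l ^ (x - 1)) / (Nat.factorial x : ℝ))) := by
    rw [← summable_nat_add_iff 1]
    have := egs_summable (a := fun x => a (x + 1)) (C := 2 * C) (fun x => by
      have := ha (x + 1)
      rw [pow_succ] at this; linarith) l
    refine this.congr ?_
    intro x
    rw [Nat.factorial_succ]
    have : (Nat.factorial x : ℝ) ≠ 0 := by positivity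
    have h3 : (x : ℝ) + 1 ≠ 0 := by positivity
    push_cast
    field_simp
  have heq : (∑' x : ℕ, a x * (((x : ℝ) * l ^ (x - 1)) / (Nat.factorial x : ℝ)))
      = egs (fun x => a (x + 1)) l := by
    rw [hsum.tsum_eq_zero_add]
    unfold egs
    simp only [Nat.cast_zero, zero_mul, zero_div, mul_zero, zero_add]
    refine tsum_congr ?_
    intro x
    rw [Nat.factorial_succ]
    have : (Nat.factorial x : ℝ) ≠ 0 := by positivity
    have h3 : (x : ℝ) + 1 ≠ 0 := by positivity
    push_cast
    field_simp
  rw [heq] at key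
  exact key

lemma exp_eq (l : ℝ) : HasSum (fun x : ℕ => l ^ x / (Nat.factorial x : ℝ)) (Real.exp l) := by
  rw [Real.exp_eq_exp_ℝ]
  exact NormedSpace.expSeries_div_hasSum_exp l

lemma egs_one {l : ℝ} (hl : 0 < l) :
    HasSum (fun x : ℕ => (1 / ((x : ℝ) + 1)) * (l ^ x / (Nat.factorial x : ℝ)))
      ((Real.exp l - 1) / l ^ 1) := by
  have h := ((hasSum_nat_add_iff' (f := fun x : ℕ => l ^ x / (Nat.factorial x : ℝ)) 1).mpr
    (exp_eq l)).div_const (l ^ 1)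
  have e : (fun x : ℕ => (1 / ((x : ℝ) + 1)) * (l ^ x / (Nat.factorial x : ℝ))) =
      fun x : ℕ => l ^ (x + 1) / (Nat.factorial (x + 1) : ℝ) / l ^ 1 := by
    funext x
    have : (Nat.factorial x : ℝ) ≠ 0 := by positivity
    simp only [Nat.factorial_succ]
    push_cast
    rw [pow_add]
    have h1 : (x : ℝ) + 1 ≠ 0 := by positivity
    have h2 : (x : ℝ) + 2 ≠ 0 := by positivity
    have h3 : (x : ℝ) + 3 ≠ 0 := by positivity
    have h2' : (x : ℝ) + 1 + 1 ≠ 0 := by positivity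
    have h3' : (x : ℝ) + 2 + 1 ≠ 0 := by positivity
    field_simp
    try ring
  have e2 : (Real.exp l - 1) / l ^ 1 =
      (Real.exp l - ∑ i ∈ Finset.range 1, l ^ i / (Nat.factorial i : ℝ)) / l ^ 1 := by
    congr 1
    simp [Finset.sum_range_succ]
    try ring
  rw [e, e2]
  exact h

lemma egs_two {l : ℝ} (hl : 0 < l) :
    HasSum (fun x : ℕ => (1 / (((x : ℝ) + 1) * (x + 2))) * (l ^ x / (Nat.factorial x : ℝ)))
      ((Real.exp l - 1 - l) / l ^ 2) := by
  have h := ((hasSum_nat_add_iff' (f := fun x : ℕ => l ^ x / (Nat.factorial x : ℝ)) 2).mpr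
    (exp_eq l)).div_const (l ^ 2)
  have e : (fun x : ℕ => (1 / (((x : ℝ) + 1) * (x + 2))) * (l ^ x / (Nat.factorial x : ℝ))) =
      fun x : ℕ => l ^ (x + 2) / (Nat.factorial (x + 2) : ℝ) / l ^ 2 := by
    funext x
    have : (Nat.factorial x : ℝ) ≠ 0 := by positivity
    simp only [Nat.factorial_succ]
    push_cast
    rw [pow_add]
    have h1 : (x : ℝ) + 1 ≠ 0 := by positivity
    have h2 : (x : ℝ) + 2 ≠ 0 := by positivity
    have h3 : (x : ℝ) + 3 ≠ 0 := by positivity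
    have h2' : (x : ℝ) + 1 + 1 ≠ 0 := by positivity
    have h3' : (x : ℝ) + 2 + 1 ≠ 0 := by positivity
    field_simp
    try ring
  have e2 : (Real.exp l - 1 - l) / l ^ 2 =
      (Real.exp l - ∑ i ∈ Finset.range 2, l ^ i / (Nat.factorial i : ℝ)) / l ^ 2 := by
    congr 1
    simp [Finset.sum_range_succ]
    try ring
  rw [e, e2]
  exact h

lemma egs_three {l : ℝ} (hl : 0 < l) :
    HasSum (fun x : ℕ => (1 / (((x : ℝ) + 1) * (x + 2) * (x + 3))) * (l ^ x / (Nat.factorial x : ℝ)))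
      ((Real.exp l - 1 - l - l ^ 2 / 2) / l ^ 3) := by
  have h := ((hasSum_nat_add_iff' (f := fun x : ℕ => l ^ x / (Nat.factorial x : ℝ)) 3).mpr
    (exp_eq l)).div_const (l ^ 3)
  have e : (fun x : ℕ => (1 / (((x : ℝ) + 1) * (x + 2) * (x + 3))) * (l ^ x / (Nat.factorial x : ℝ))) =
      fun x : ℕ => l ^ (x + 3) / (Nat.factorial (x + 3) : ℝ) / l ^ 3 := by
    funext x
    have : (Nat.factorial x : ℝ) ≠ 0 := by positivity
    simp only [Nat.factorial_succ]
    push_cast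
    rw [pow_add]
    have h1 : (x : ℝ) + 1 ≠ 0 := by positivity
    have h2 : (x : ℝ) + 2 ≠ 0 := by positivity
    have h3 : (x : ℝ) + 3 ≠ 0 := by positivity
    have h2' : (x : ℝ) + 1 + 1 ≠ 0 := by positivity
    have h3' : (x : ℝ) + 2 + 1 ≠ 0 := by positivity
    field_simp
    try ring
  have e2 : (Real.exp l - 1 - l - l ^ 2 / 2) / l ^ 3 =
      (Real.exp l - ∑ i ∈ Finset.range 3, l ^ i / (Nat.factorial i : ℝ)) / l ^ 3 := by
    congr 1
    simp [Finset.sum_range_succ]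
    try ring
  rw [e, e2]
  exact h

lemma log_ratio_bound {y : ℝ} (h0 : 0 ≤ y) (h1 : y < 1) :
    Real.log (1 + y) - Real.log (1 - y) ≤ 2 / 3 * (1 - y ^ 2)⁻¹ * y + 4 / 3 * y := by
  have hA := Real.hasSum_log_sub_log_of_abs_lt_one (x := y) (by rwa [abs_of_nonneg h0])
  have hy2 : y ^ 2 < 1 := by nlinarith
  have hB := (((hasSum_geometric_of_lt_one (sq_nonneg y) hy2).mul_left (2 / 3)).mul_right y).add
    (hasSum_ite_eq (0 : ℕ) (4 / 3 * y))
  refine hasSum_le ?_ hA hB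
  intro k
  rcases Nat.eq_zero_or_pos k with rfl | hk
  · simp; linarith
  · have hk' : (1 : ℝ) ≤ k := by exact_mod_cast hk
    have : (1 : ℝ) / (2 * k + 1) ≤ 1 / 3 := by
      apply one_div_le_one_div_of_le <;> linarith
    simp only [hk.ne', if_false, add_zero]
    rw [pow_succ, pow_mul]
    have h3 : 0 ≤ (y ^ 2) ^ k * y := by positivity
    nlinarith

/-- The correction sequence. -/
noncomputable def corr (x : ℕ) : ℝ :=
  1 / 24 * (1 / (((x : ℝ) + 1) * (x + 2))) + 1 / 3 * (1 / (((x : ℝ) + 1) * (x + 2) * (x + 3)))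
    + (if x = 0 then 1 / 18 else 0)

lemma corr_nonneg (x : ℕ) : 0 ≤ corr x := by
  unfold corr
  split_ifs <;> positivity

lemma corr_le (x : ℕ) : corr x ≤ 1 := by
  unfold corr
  have hx : (0 : ℝ) ≤ x := Nat.cast_nonneg x
  have h1 : 1 / (((x : ℝ) + 1) * (x + 2)) ≤ 1 := by
    rw [div_le_one (by positivity)]; nlinarith
  have h2 : 1 / (((x : ℝ) + 1) * (x + 2) * (x + 3)) ≤ 1 := by
    rw [div_le_one (by positivity)]
    have : 0 ≤ (x : ℝ) * x := by positivity
    have : 0 ≤ (x : ℝ) * x * x := by positivity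
    nlinarith
  split_ifs <;> linarith

lemma log_step (x : ℕ) : Real.log ((x : ℝ) + 1 + 1 / 2) - Real.log ((x : ℝ) + 1 / 2) ≤
    1 / ((x : ℝ) + 1) + 1 / (12 * ((x : ℝ) + 1) * (x + 1 / 2) * (x + 3 / 2)) := by
  have hx : (0 : ℝ) ≤ x := Nat.cast_nonneg x
  have hy1 : 1 / (2 * ((x : ℝ) + 1)) < 1 := by
    rw [div_lt_one (by positivity)]; linarith
  have h := log_ratio_bound (y := 1 / (2 * ((x : ℝ) + 1))) (by positivity) hy1
  rw [← Real.log_div (by positivity) (by linarith)] at h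
  rw [← Real.log_div (by positivity) (by positivity)]
  have e1 : (1 + 1 / (2 * ((x : ℝ) + 1))) / (1 - 1 / (2 * ((x : ℝ) + 1))) =
      ((x : ℝ) + 1 + 1 / 2) / ((x : ℝ) + 1 / 2) := by
    rw [div_eq_div_iff (by linarith) (by positivity)]
    field_simp
    ring
  have e2 : (1 - (1 / (2 * ((x : ℝ) + 1))) ^ 2) =
      ((x + 1 / 2) * (x + 3 / 2)) / ((x : ℝ) + 1) ^ 2 := by
    field_simp
    ring
  rw [e1, e2] at h
  refine h.trans (le_of_eq ?_)
  field_simp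
  ring

lemma corr_step (x : ℕ) : 1 / (12 * ((x : ℝ) + 1) * (x + 1 / 2) * (x + 3 / 2)) ≤
    corr x - corr (x + 1) := by
  unfold corr
  rcases Nat.eq_zero_or_pos x with rfl | hx
  · norm_num
  · have hx' : (1 : ℝ) ≤ x := by exact_mod_cast hx
    obtain ⟨z, hz, hz0⟩ : ∃ z : ℝ, (x : ℝ) = z + 1 ∧ 0 ≤ z := ⟨x - 1, by ring, by linarith⟩
    simp only [hx.ne', Nat.succ_ne_zero, if_false, add_zero]
    push_cast
    rw [hz]
    rw [← sub_nonneg]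
    have : 1 / 24 * (1 / ((z + 1 + 1) * (z + 1 + 2))) + 1 / 3 * (1 / ((z + 1 + 1) * (z + 1 + 2) * (z + 1 + 3)))
        - (1 / 24 * (1 / ((z + 1 + 1 + 1) * (z + 1 + 1 + 2))) +
          1 / 3 * (1 / ((z + 1 + 1 + 1) * (z + 1 + 1 + 2) * (z + 1 + 1 + 3))))
        - 1 / (12 * (z + 1 + 1) * (z + 1 + 1 / 2) * (z + 1 + 3 / 2))
        = ((z + 5 + 12) * ((z + 3 / 2) * (z + 5 / 2)) - (z + 3) * (z + 4) * (z + 5)) /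
          (12 * (z + 2) * (z + 3) * (z + 4) * (z + 5) * (z + 3 / 2) * (z + 5 / 2)) := by
      have a1 : z + 1 + 1 = z + 2 := by ring
      have a2 : z + 1 + 2 = z + 3 := by ring
      have a3 : z + 1 + 3 = z + 4 := by ring
      have a4 : z + 2 + 1 = z + 3 := by ring
      have a5 : z + 2 + 2 = z + 4 := by ring
      have a6 : z + 2 + 3 = z + 5 := by ring
      have a7 : z + 1 + 1 / 2 = z + 3 / 2 := by ring
      have a8 : z + 1 + 3 / 2 = z + 5 / 2 := by ring
      rw [a1, a2, a3, a4, a5, a6, a7, a8]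
      have b2 : z + 2 ≠ 0 := by positivity
      have b3 : z + 3 ≠ 0 := by positivity
      have b4 : z + 4 ≠ 0 := by positivity
      have b5 : z + 5 ≠ 0 := by positivity
      have b6 : z + 3 / 2 ≠ 0 := by positivity
      have b7 : z + 5 / 2 ≠ 0 := by positivity
      field_simp
      ring
    rw [this]
    apply div_nonneg _ (by positivity)
    have : 0 ≤ z ^ 2 := sq_nonneg z
    nlinarith

/-- The main sequence. -/
noncomputable def hseq (x : ℕ) : ℝ := Real.log ((x : ℝ) + 1 / 2) + corr x

lemma two_pow_ge (x : ℕ) : (x : ℝ) + 1 ≤ 2 ^ x := by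
  exact_mod_cast (Nat.lt_two_pow_self (n := x))

lemma log_half_bound (x : ℕ) : |Real.log ((x : ℝ) + 1 / 2)| ≤ 1 * 2 ^ x := by
  have hx : (0 : ℝ) ≤ x := Nat.cast_nonneg x
  have h := two_pow_ge x
  rw [abs_le]
  constructor
  · have h1 := Real.one_sub_inv_le_log_of_pos (x := (x : ℝ) + 1 / 2) (by positivity)
    have h2 : ((x : ℝ) + 1 / 2)⁻¹ ≤ 2 := by
      rw [inv_le_comm₀ (by positivity) (by norm_num)]; linarith
    linarith
  · have h1 := Real.log_le_sub_one_of_pos (x := (x : ℝ) + 1 / 2) (by positivity)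
    linarith

lemma hseq_bound (x : ℕ) : |hseq x| ≤ 2 * 2 ^ x := by
  have h := two_pow_ge x
  have hx : (0 : ℝ) ≤ x := Nat.cast_nonneg x
  unfold hseq
  refine (abs_add_le _ _).trans ?_
  have h1 := log_half_bound x
  rw [abs_of_nonneg (corr_nonneg x)]
  have h2 := corr_le x
  linarith

lemma hseq_step (x : ℕ) : hseq (x + 1) - hseq x ≤ 1 / ((x : ℝ) + 1) := by
  have h1 := log_step x
  have h2 := corr_step x
  unfold hseq
  push_cast
  linarith

noncomputable def bigF (l : ℝ) : ℝ :=
  Real.exp (-l) * egs hseq l - Real.log l - Real.exp (-l) / (l + 1)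

lemma bigF_hasDerivAt {l : ℝ} (hl : 0 < l) : HasDerivAt bigF
    ((Real.exp (-l) * (-1)) * egs hseq l + Real.exp (-l) * egs (fun x => hseq (x + 1)) l - l⁻¹
      - ((Real.exp (-l) * (-1)) * (l + 1) - Real.exp (-l) * 1) / (l + 1) ^ 2) l := by
  have h1 : HasDerivAt (fun l : ℝ => Real.exp (-l)) (Real.exp (-l) * (-1)) l :=
    (hasDerivAt_neg l).exp
  have h2 := egs_hasDerivAt hseq_bound l
  have h3 := Real.hasDerivAt_log hl.ne'
  have h4 : HasDerivAt (fun l : ℝ => l + 1) 1 l := (hasDerivAt_id l).add_const 1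
  exact ((h1.mul h2).sub h3).sub (h1.div h4 (by positivity))

lemma egs_step {l : ℝ} (hl : 0 < l) :
    egs (fun x => hseq (x + 1)) l - egs hseq l ≤ (Real.exp l - 1) / l := by
  have s1 := egs_summable (a := fun x => hseq (x + 1)) (C := 4) (fun x => by
      have := hseq_bound (x + 1)
      rw [pow_succ] at this; linarith) l
  have s2 := egs_summable hseq_bound l
  have h := s1.hasSum.sub s2.hasSum
  have h1 := egs_one hl
  rw [pow_one] at h1
  refine hasSum_le ?_ h h1
  intro x
  rw [← sub_mul]
  exact mul_le_mul_of_nonneg_right (hseq_step x) (by positivity)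

lemma bigF_antitone : AntitoneOn bigF (Set.Ioi 0) := by
  apply antitoneOn_of_deriv_nonpos (convex_Ioi 0)
  · intro l hl
    exact (bigF_hasDerivAt hl).continuousAt.continuousWithinAt
  · intro l hl
    rw [interior_Ioi] at hl
    exact (bigF_hasDerivAt hl).differentiableAt.differentiableWithinAt
  · intro l hl
    rw [interior_Ioi] at hl
    have hl' : 0 < l := hl
    rw [(bigF_hasDerivAt hl).deriv]
    have h := egs_step hl'
    have hE := Real.exp_pos (-l)
    have hmul := mul_le_mul_of_nonneg_left h hE.le
    have e1 : Real.exp (-l) * ((Real.exp l - 1) / l) = l⁻¹ - Real.exp (-l) * l⁻¹ := by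
      have : Real.exp (-l) * Real.exp l = 1 := by rw [← Real.exp_add]; simp
      rw [mul_div_assoc', mul_sub, this]
      field_simp
    rw [e1] at hmul
    have e2 : (Real.exp (-l) * (-1) * (l + 1) - Real.exp (-l) * 1) / (l + 1) ^ 2
        = - (Real.exp (-l) * ((l + 2) / (l + 1) ^ 2)) := by
      field_simp; ring
    rw [e2]
    have h3 : (l + 2) / (l + 1) ^ 2 ≤ l⁻¹ := by
      rw [inv_eq_one_div, div_le_div_iff₀ (by positivity) hl']
      nlinarith
    have h4 := mul_le_mul_of_nonneg_left h3 hE.le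
    linarith

lemma bigF_lower {l : ℝ} (hl : 0 < l) : -(3 / l) ≤ bigF l := by
  have s := (egs_summable hseq_bound l).hasSum
  have h := ((exp_eq l).mul_left (Real.log l + 1)).sub
    (((egs_one hl).mul_left l).add ((egs_two hl).mul_left (2 * l)))
  have hle := hasSum_le (fun x => ?_) h s
  · have hE := Real.exp_pos (-l)
    have hEE : Real.exp (-l) * Real.exp l = 1 := by rw [← Real.exp_add]; simp
    have hmul := mul_le_mul_of_nonneg_left hle hE.le
    have e : Real.exp (-l) * ((Real.log l + 1) * Real.exp l -
        (l * ((Real.exp l - 1) / l ^ 1) + 2 * l * ((Real.exp l - 1 - l) / l ^ 2))) =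
        Real.log l - 2 / l + Real.exp (-l) * (1 + 2 * (1 + l) / l) := by
      have e0 : Real.exp (-l) * ((Real.log l + 1) * Real.exp l -
        (l * ((Real.exp l - 1) / l ^ 1) + 2 * l * ((Real.exp l - 1 - l) / l ^ 2))) =
        (Real.exp (-l) * Real.exp l) * (Real.log l - 2 / l)
          + Real.exp (-l) * (1 + 2 * (1 + l) / l) := by
        field_simp; ring
      rw [e0, hEE, one_mul]
    rw [e] at hmul
    unfold bigF
    have h5 : 0 ≤ Real.exp (-l) * (1 + 2 * (1 + l) / l) := by positivity
    have h6 : Real.exp (-l) / (l + 1) ≤ 1 / l := by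
      apply div_le_div₀ zero_le_one _ hl (by linarith)
      rw [Real.exp_le_one_iff]; linarith
    have h7 : 3 / l = 2 / l + 1 / l := by ring
    have h8 : Real.exp (-l) * egs hseq l =
      Real.exp (-l) * ∑' x : ℕ, hseq x * (l ^ x / (Nat.factorial x : ℝ)) := rfl
    rw [h8, h7]
    linarith
  · have hx : (0 : ℝ) ≤ x := Nat.cast_nonneg x
    have h1 := Real.one_sub_inv_le_log_of_pos (x := ((x : ℝ) + 1 / 2) / l) (by positivity)
    rw [Real.log_div (by positivity) hl.ne', inv_div] at h1
    have h2 : l / ((x : ℝ) + 1 / 2) ≤ l * (1 / ((x : ℝ) + 1)) +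
        2 * l * (1 / (((x : ℝ) + 1) * (x + 2))) := by
      have : l * (1 / ((x : ℝ) + 1)) + 2 * l * (1 / (((x : ℝ) + 1) * (x + 2))) - l / ((x : ℝ) + 1 / 2)
          = l * (3 / 2 * x) / (((x : ℝ) + 1) * (x + 2) * (x + 1 / 2)) := by
        have b6 : (x : ℝ) + 1 / 2 ≠ 0 := by positivity
        field_simp
        ring
      have h3 : 0 ≤ l * (3 / 2 * x) / (((x : ℝ) + 1) * (x + 2) * (x + 1 / 2)) := by positivity
      linarith
    have h3 := corr_nonneg x
    have h4 : Real.log l + 1 - (l * (1 / ((x : ℝ) + 1)) +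
        2 * l * (1 / (((x : ℝ) + 1) * (x + 2)))) ≤ hseq x := by
      unfold hseq; linarith
    have h5 : 0 ≤ l ^ x / (Nat.factorial x : ℝ) := by positivity
    have h6 := mul_le_mul_of_nonneg_right h4 h5
    linarith

lemma bigF_nonneg {l : ℝ} (hl : 0 < l) : 0 ≤ bigF l := by
  have ht : Filter.Tendsto (fun M : ℝ => -(3 / M)) Filter.atTop (nhds 0) := by
    have := (tendsto_const_nhds (x := (3 : ℝ))).div_atTop (Filter.tendsto_id (α := ℝ) (x := Filter.atTop))
    simpa using this.neg
  refine le_of_tendsto ht ?_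
  filter_upwards [Filter.eventually_ge_atTop l] with M hM
  exact (bigF_lower (hl.trans_le hM)).trans (bigF_antitone hl (hl.trans_le hM) hM)

lemma corr_sum {l : ℝ} (hl : 0 < l) :
    HasSum (fun x : ℕ => corr x * (l ^ x / (Nat.factorial x : ℝ)))
      (1 / 24 * ((Real.exp l - 1 - l) / l ^ 2) + 1 / 3 * ((Real.exp l - 1 - l - l ^ 2 / 2) / l ^ 3)
        + 1 / 18) := by
  have h := (((egs_two hl).mul_left (1 / 24)).add ((egs_three hl).mul_left (1 / 3))).add
    (hasSum_ite_eq (0 : ℕ) (1 / 18 : ℝ))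
  suffices e : (fun x : ℕ => corr x * (l ^ x / (Nat.factorial x : ℝ))) = fun x : ℕ =>
      1 / 24 * ((1 / (((x : ℝ) + 1) * (x + 2))) * (l ^ x / (Nat.factorial x : ℝ))) +
      1 / 3 * ((1 / (((x : ℝ) + 1) * (x + 2) * (x + 3))) * (l ^ x / (Nat.factorial x : ℝ))) +
      (if x = 0 then 1 / 18 else 0) by
    rw [e]; exact h
  funext x
  unfold corr
  split_ifs with hx
  · subst hx; norm_num
  · ring

lemma f_lower {l : ℝ} (hl : 0 < l) : l * (Real.exp (-l) / (l + 1) - Real.exp (-l) *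
    (1 / 24 * ((Real.exp l - 1 - l) / l ^ 2) + 1 / 3 * ((Real.exp l - 1 - l - l ^ 2 / 2) / l ^ 3)
        + 1 / 18)) ≤ f l := by
  unfold f
  apply mul_le_mul_of_nonneg_left _ hl.le
  have hEE : Real.exp (-l) * Real.exp l = 1 := by rw [← Real.exp_add]; simp
  have s := (egs_summable hseq_bound l).hasSum
  have h := ((s.sub (corr_sum hl)).sub ((exp_eq l).mul_left (Real.log l))).mul_left (Real.exp (-l))
  have e : (fun x : ℕ => Real.log (((x : ℝ) + 1 / 2) / l) * Real.exp (-l) * l ^ x /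
      (Nat.factorial x : ℝ)) = fun x : ℕ => Real.exp (-l) * (hseq x * (l ^ x / (Nat.factorial x : ℝ)) -
        corr x * (l ^ x / (Nat.factorial x : ℝ)) - Real.log l * (l ^ x / (Nat.factorial x : ℝ))) := by
    funext x
    rw [Real.log_div (by positivity) hl.ne']
    unfold hseq
    ring
  rw [e, h.tsum_eq]
  have hF := bigF_nonneg hl
  unfold bigF egs at hF
  have : Real.exp (-l) * (Real.log l * Real.exp l) = Real.log l := by
    rw [mul_left_comm, hEE, mul_one]
  rw [mul_sub, mul_sub, this]
  linarith

lemma exp_taylor {u : ℝ} (h0 : 0 ≤ u) (h1 : u ≤ 1) :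
    Real.exp u ≤ 1 + u + u ^ 2 / 2 + u ^ 3 / 6 + u ^ 4 / 24 + u ^ 5 / 100 := by
  have h := Real.exp_bound' h0 h1 (n := 5) (by norm_num)
  refine h.trans (le_of_eq ?_)
  simp [Finset.sum_range_succ, Nat.factorial]
  ring

lemma exp_nat_bound (k : ℕ) : Real.exp (k : ℝ) ≤ (2.7182818286 : ℝ) ^ k := by
  rw [← Real.exp_one_pow]
  exact pow_le_pow_left₀ (Real.exp_pos _).le Real.exp_one_lt_d9.le k

/-- Difference of the two sides of the final inequality, with `E` in place of `exp l`. -/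
noncomputable def gap (E l : ℝ) : ℝ :=
  l ^ 3 + (l + 1) * (l * (1 + l) / 24 + (1 + l + l ^ 2 / 2) / 3 - l ^ 3 / 18)
    - E * ((l + 1) * (1 / 3 + l / 24 - l ^ 2 / 50))

lemma gap_anti {E E' l : ℝ} (hl : 0 ≤ l) (hl5 : l ≤ 5) (h : E ≤ E') : gap E' l ≤ gap E l := by
  unfold gap
  have h1 : 0 ≤ (l + 1) * (1 / 3 + l / 24 - l ^ 2 / 50) := by
    apply mul_nonneg (by linarith)
    nlinarith
  have := mul_le_mul_of_nonneg_right h h1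
  linarith

lemma exp_shift {k : ℕ} {c u : ℝ} (hc : (2.7182818286 : ℝ) ^ k ≤ c) (h0 : 0 ≤ u) (h1 : u ≤ 1) :
    Real.exp ((k : ℝ) + u) ≤
      c * (1 + u + u ^ 2 / 2 + u ^ 3 / 6 + u ^ 4 / 24 + u ^ 5 / 100) := by
  rw [Real.exp_add]
  exact mul_le_mul ((exp_nat_bound k).trans hc) (exp_taylor h0 h1) (Real.exp_pos _).le
    ((by positivity : (0 : ℝ) ≤ (2.7182818286 : ℝ) ^ k).trans hc)

lemma gap_0 {u : ℝ} (h0 : 0 < u) (h1 : u ≤ 1) :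
    0 < gap (Real.exp ((0 : ℕ) + u)) ((0 : ℕ) + u) := by
  have hE := exp_shift (k := 0) (c := 1) (by norm_num) h0.le h1
  refine lt_of_lt_of_le ?_ (gap_anti (by push_cast; linarith) (by push_cast; linarith) hE)
  have e : gap (1 * (1 + u + u ^ 2 / 2 + u ^ 3 / 6 + u ^ 4 / 24 + u ^ 5 / 100))
      ((0 : ℕ) + u) =
        1 / 50 * u ^ 2 * (1 - u) ^ 6
        + 3701 / 3600 * u ^ 3 * (1 - u) ^ 5
        + 1887 / 400 * u ^ 4 * (1 - u) ^ 4
        + 14363 / 1600 * u ^ 5 * (1 - u) ^ 3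
        + 12391 / 1440 * u ^ 6 * (1 - u) ^ 2
        + 1486597 / 360000 * u ^ 7 * (1 - u) ^ 1
        + 142597 / 180000 * u ^ 8 * (1 - u) ^ 0 := by
    unfold gap
    push_cast
    ring
  rw [e]
  rcases eq_or_lt_of_le h1 with h | h
  · subst h; norm_num
  · have hw : 0 < 1 - u := by linarith
    positivity

lemma gap_1 {u : ℝ} (h0 : 0 ≤ u) (h1 : u ≤ 1) :
    0 < gap (Real.exp ((1 : ℕ) + u)) ((1 : ℕ) + u) := by
  have hE := exp_shift (k := 1) (c := 27183 / 10000) (by norm_num) h0 h1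
  refine lt_of_lt_of_le ?_ (gap_anti (by push_cast; linarith) (by push_cast; linarith) hE)
  have e : gap (27183 / 10000 * (1 + u + u ^ 2 / 2 + u ^ 3 / 6 + u ^ 4 / 24 + u ^ 5 / 100))
      ((1 : ℕ) + u) =
        7130063 / 9000000 * u ^ 0 * (1 - u) ^ 8
        + 153808099 / 18000000 * u ^ 1 * (1 - u) ^ 7
        + 11851597 / 300000 * u ^ 2 * (1 - u) ^ 6
        + 1226813077 / 12000000 * u ^ 3 * (1 - u) ^ 5
        + 1296125403 / 8000000 * u ^ 4 * (1 - u) ^ 4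
        + 193323761309 / 1200000000 * u ^ 5 * (1 - u) ^ 3
        + 88419382159 / 900000000 * u ^ 6 * (1 - u) ^ 2
        + 24211813709 / 720000000 * u ^ 7 * (1 - u) ^ 1
        + 2972117227 / 600000000 * u ^ 8 * (1 - u) ^ 0 := by
    unfold gap
    push_cast
    ring
  rw [e]
  rcases eq_or_lt_of_le h1 with h | h
  · subst h; norm_num
  · have hw : 0 < 1 - u := by linarith
    positivity

lemma gap_2 {u : ℝ} (h0 : 0 ≤ u) (h1 : u ≤ 1) :
    0 < gap (Real.exp ((2 : ℕ) + u)) ((2 : ℕ) + u) := by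
  have hE := exp_shift (k := 2) (c := 18473 / 2500) (by norm_num) h0 h1
  refine lt_of_lt_of_le ?_ (gap_anti (by push_cast; linarith) (by push_cast; linarith) hE)
  have e : gap (18473 / 2500 * (1 + u + u ^ 2 / 2 + u ^ 3 / 6 + u ^ 4 / 24 + u ^ 5 / 100))
      ((2 : ℕ) + u) =
        3715181 / 750000 * u ^ 0 * (1 - u) ^ 8
        + 205311547 / 4500000 * u ^ 1 * (1 - u) ^ 7
        + 409943729 / 2250000 * u ^ 2 * (1 - u) ^ 6
        + 1235948429 / 3000000 * u ^ 3 * (1 - u) ^ 5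
        + 3461668769 / 6000000 * u ^ 4 * (1 - u) ^ 4
        + 461232043547 / 900000000 * u ^ 5 * (1 - u) ^ 3
        + 126945120581 / 450000000 * u ^ 6 * (1 - u) ^ 2
        + 1056927631 / 12000000 * u ^ 7 * (1 - u) ^ 1
        + 2693379679 / 225000000 * u ^ 8 * (1 - u) ^ 0 := by
    unfold gap
    push_cast
    ring
  rw [e]
  rcases eq_or_lt_of_le h1 with h | h
  · subst h; norm_num
  · have hw : 0 < 1 - u := by linarith
    positivity

lemma gap_3 {u : ℝ} (h0 : 0 ≤ u) (h1 : u ≤ 1) :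
    0 < gap (Real.exp ((3 : ℕ) + u)) ((3 : ℕ) + u) := by
  have hE := exp_shift (k := 3) (c := 10043 / 500) (by norm_num) h0 h1
  refine lt_of_lt_of_le ?_ (gap_anti (by push_cast; linarith) (by push_cast; linarith) hE)
  have e : gap (10043 / 500 * (1 + u + u ^ 2 / 2 + u ^ 3 / 6 + u ^ 4 / 24 + u ^ 5 / 100))
      ((3 : ℕ) + u) =
        299273 / 25000 * u ^ 0 * (1 - u) ^ 8
        + 10344129 / 100000 * u ^ 1 * (1 - u) ^ 7
        + 38956369 / 100000 * u ^ 2 * (1 - u) ^ 6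
        + 1505122417 / 1800000 * u ^ 3 * (1 - u) ^ 5
        + 112104271 / 100000 * u ^ 4 * (1 - u) ^ 4
        + 57846982777 / 60000000 * u ^ 5 * (1 - u) ^ 3
        + 366831956 / 703125 * u ^ 6 * (1 - u) ^ 2
        + 29424281189 / 180000000 * u ^ 7 * (1 - u) ^ 1
        + 206236409 / 9000000 * u ^ 8 * (1 - u) ^ 0 := by
    unfold gap
    push_cast
    ring
  rw [e]
  rcases eq_or_lt_of_le h1 with h | h
  · subst h; norm_num
  · have hw : 0 < 1 - u := by linarith
    positivity

lemma gap_4 {u : ℝ} (h0 : 0 ≤ u) (h1 : u ≤ 1) :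
    0 < gap (Real.exp ((4 : ℕ) + u)) ((4 : ℕ) + u) := by
  have hE := exp_shift (k := 4) (c := 136499 / 2500) (by norm_num) h0 h1
  refine lt_of_lt_of_le ?_ (gap_anti (by push_cast; linarith) (by push_cast; linarith) hE)
  have e : gap (136499 / 2500 * (1 + u + u ^ 2 / 2 + u ^ 3 / 6 + u ^ 4 / 24 + u ^ 5 / 100))
      ((4 : ℕ) + u) =
        5156081 / 225000 * u ^ 0 * (1 - u) ^ 8
        + 914177839 / 4500000 * u ^ 1 * (1 - u) ^ 7
        + 399660021 / 500000 * u ^ 2 * (1 - u) ^ 6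
        + 5488120637 / 3000000 * u ^ 3 * (1 - u) ^ 5
        + 12023642869 / 4500000 * u ^ 4 * (1 - u) ^ 4
        + 460142113813 / 180000000 * u ^ 5 * (1 - u) ^ 3
        + 705090292369 / 450000000 * u ^ 6 * (1 - u) ^ 2
        + 101316976819 / 180000000 * u ^ 7 * (1 - u) ^ 1
        + 544370131 / 6000000 * u ^ 8 * (1 - u) ^ 0 := by
    unfold gap
    push_cast
    ring
  rw [e]
  rcases eq_or_lt_of_le h1 with h | h
  · subst h; norm_num
  · have hw : 0 < 1 - u := by linarith
    positivity

lemma gap_5 {l : ℝ} (h0 : 5 ≤ l) (h1 : l ≤ 53 / 10) : 0 < gap (Real.exp l) l := by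
  have hE := exp_shift (k := 5) (c := 149) (u := l - 5) (by norm_num) (by linarith) (by linarith)
  have hE2 : Real.exp l ≤ 149 * (3 / 2) := by
    have e : ((5 : ℕ) : ℝ) + (l - 5) = l := by push_cast; ring
    rw [e] at hE
    refine hE.trans ?_
    have hu0 : 0 ≤ l - 5 := by linarith
    have hu : l - 5 ≤ 3 / 10 := by linarith
    have p2 := pow_le_pow_left₀ hu0 hu 2
    have p3 := pow_le_pow_left₀ hu0 hu 3
    have p4 := pow_le_pow_left₀ hu0 hu 4
    have p5 := pow_le_pow_left₀ hu0 hu 5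
    norm_num at p2 p3 p4 p5
    linarith
  have hq : (l + 1) * (1 / 3 + l / 24 - l ^ 2 / 50) ≤ 63 / 10 * (1 / 20) := by
    have h2 : 1 / 3 + l / 24 - l ^ 2 / 50 ≤ 1 / 20 := by nlinarith
    nlinarith
  have hE0 := Real.exp_pos l
  have hm : Real.exp l * ((l + 1) * (1 / 3 + l / 24 - l ^ 2 / 50)) ≤ 149 * (3 / 2) * (63 / 10 * (1 / 20)) :=
    (mul_le_mul_of_nonneg_left hq hE0.le).trans (mul_le_mul_of_nonneg_right hE2 (by norm_num))
  unfold gap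
  have h3 : (125 : ℝ) ≤ l ^ 3 := by
    have := pow_le_pow_left₀ (by norm_num) h0 3
    norm_num at this; linarith
  have h4 : l ^ 3 * (l + 1) / 18 ≤ l ^ 3 * (63 / 10) / 18 := by
    have : l ^ 3 * (l + 1) ≤ l ^ 3 * (63 / 10) := by
      apply mul_le_mul_of_nonneg_left <;> linarith
    linarith
  have h5 : 0 ≤ (l + 1) * (l * (1 + l) / 24) := by positivity
  have h6 : 6 * (18 / 3) ≤ (l + 1) * ((1 + l + l ^ 2 / 2) / 3) := by
    apply mul_le_mul <;> nlinarith
  nlinarith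

lemma gap_6 {l : ℝ} (h0 : 53 / 10 ≤ l) : 0 < gap (Real.exp l) l := by
  have hl : 0 < l := by linarith
  have hE0 := Real.exp_pos l
  have h3 : 0 < l ^ 3 := by positivity
  have h5 : 0 ≤ (l + 1) * (l * (1 + l) / 24 + (1 + l + l ^ 2 / 2) / 3) := by positivity
  have hq : 1 / 3 + l / 24 - l ^ 2 / 50 ≤ 0 := by nlinarith
  unfold gap
  rcases le_total l 15 with h | h
  · have h6 : 0 ≤ Real.exp l * ((l + 1) * -(1 / 3 + l / 24 - l ^ 2 / 50)) := by
      apply mul_nonneg hE0.le (mul_nonneg (by linarith) (by linarith))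
    have h7 : l ^ 3 * (l + 1) ≤ l ^ 3 * 16 := by
      apply mul_le_mul_of_nonneg_left <;> linarith
    nlinarith
  · have hE : l ^ 2 / 2 ≤ Real.exp l := by
      have := Real.quadratic_le_exp_of_nonneg hl.le
      linarith
    have hq2 : l ^ 2 / 100 ≤ -(1 / 3 + l / 24 - l ^ 2 / 50) := by nlinarith
    have h6 : (l ^ 2 / 2) * ((l + 1) * (l ^ 2 / 100)) ≤
        Real.exp l * ((l + 1) * -(1 / 3 + l / 24 - l ^ 2 / 50)) := by
      apply mul_le_mul hE _ (by positivity) hE0.le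
      apply mul_le_mul_of_nonneg_left hq2 (by linarith)
    have h7 : (l + 1) * l ^ 3 / 18 ≤ (l ^ 2 / 2) * ((l + 1) * (l ^ 2 / 100)) := by
      have : 0 ≤ (l + 1) * l ^ 3 * (l - 15) := by
        apply mul_nonneg (by positivity) (by linarith)
      have h8 : 0 ≤ (l + 1) * l ^ 3 := by positivity
      nlinarith
    nlinarith

lemma gap_pos {l : ℝ} (hl : 0 < l) : 0 < gap (Real.exp l) l := by
  rcases le_total l 1 with h | h1
  · have := gap_0 (u := l) hl h
    simpa using this
  rcases le_total l 2 with h | h2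
  · have := gap_1 (u := l - 1) (by linarith) (by linarith)
    have e : ((1 : ℕ) : ℝ) + (l - 1) = l := by push_cast; ring
    rwa [e] at this
  rcases le_total l 3 with h | h3
  · have := gap_2 (u := l - 2) (by linarith) (by linarith)
    have e : ((2 : ℕ) : ℝ) + (l - 2) = l := by push_cast; ring
    rwa [e] at this
  rcases le_total l 4 with h | h4
  · have := gap_3 (u := l - 3) (by linarith) (by linarith)
    have e : ((3 : ℕ) : ℝ) + (l - 3) = l := by push_cast; ring
    rwa [e] at this
  rcases le_total l 5 with h | h5
  · have := gap_4 (u := l - 4) (by linarith) (by linarith)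
    have e : ((4 : ℕ) : ℝ) + (l - 4) = l := by push_cast; ring
    rwa [e] at this
  rcases le_total l (53 / 10) with h | h6
  · exact gap_5 h5 h
  · exact gap_6 h6

theorem stmt_7 (lam : ℝ) (hlam : 0 < lam) : f lam > -0.02 := by
  refine lt_of_lt_of_le ?_ (f_lower hlam)
  have hg := gap_pos hlam
  have hEE : Real.exp (-lam) * Real.exp lam = 1 := by rw [← Real.exp_add]; simp
  have hpos : 0 < Real.exp (-lam) * gap (Real.exp lam) lam / (lam ^ 2 * (lam + 1)) := by
    have := Real.exp_pos (-lam)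
    positivity
  have e : Real.exp (-lam) * gap (Real.exp lam) lam / (lam ^ 2 * (lam + 1)) =
      lam * (Real.exp (-lam) / (lam + 1) - Real.exp (-lam) *
        (1 / 24 * ((Real.exp lam - 1 - lam) / lam ^ 2) +
          1 / 3 * ((Real.exp lam - 1 - lam - lam ^ 2 / 2) / lam ^ 3) + 1 / 18))
      + 1 / 50 * (Real.exp (-lam) * Real.exp lam) := by
    unfold gap
    field_simp
    ring
  rw [hEE] at e
  rw [e] at hpos
  norm_num at hpos ⊢
  linarith
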